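/- Let α be a composition, l = max{i : α_i ≠ 0}, and n = max{l, α_1, ..., α_l}. Then the support of the key polynomial κ_α equals { ξ^C : C = (C_1,...,C_n), C_j ≤ D(α)_j for all j ∈ [n] }, where D(α)_j = {i ≤ n : α_i ≥ j} are the columns of the skyline diagram of α and ξ^C_i = #{ j : i ∈ C_j }. -/

import Mathlib

open Finset MvPolynomial

/-- `DomLE R S`: `R` and `S` have the same cardinality and, for each `k`, the `k`-th least
element of `R` does not exceed the `k`-th least element of `S`.  The bases of the Schubert
matroid `SM_n(S)` are exactly the `B` with `DomLE B S`. -/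
def DomLE {α : Type*} [LinearOrder α] (R S : Finset α) : Prop :=
  R.card = S.card ∧
    ∀ (k : ℕ) (hR : k < (R.sort (· ≤ ·)).length) (hS : k < (S.sort (· ≤ ·)).length),
      (R.sort (· ≤ ·)).get ⟨k, hR⟩ ≤ (S.sort (· ≤ ·)).get ⟨k, hS⟩


/-- The transposition `s_i` acting on polynomials. -/
noncomputable def sw (i : ℕ) : MvPolynomial ℕ ℤ →ₐ[ℤ] MvPolynomial ℕ ℤ :=
  rename (Equiv.swap i (i + 1))

lemma sw_X (i j : ℕ) : sw i (X j) = X (Equiv.swap i (i + 1) j) := by simp [sw]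

lemma sw_X_self (i : ℕ) : sw i (X i) = X (i + 1) := by simp [sw]
lemma sw_X_succ (i : ℕ) : sw i (X (i + 1)) = X i := by simp [sw]
lemma sw_X_of_ne (i j : ℕ) (h : j ≠ i) (h' : j ≠ i + 1) : sw i (X j) = X j := by
  simp [sw, Equiv.swap_apply_of_ne_of_ne h h']

lemma sw_sw (i : ℕ) (f : MvPolynomial ℕ ℤ) : sw i (sw i f) = f := by
  simp only [sw, rename_rename]
  have : (⇑(Equiv.swap i (i + 1)) ∘ ⇑(Equiv.swap i (i + 1))) = id := by
    funext k; simp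
  rw [this, rename_id_apply]

lemma X_sub_ne (i j : ℕ) (h : i ≠ j) : (X i - X j : MvPolynomial ℕ ℤ) ≠ 0 := by
  intro h0
  exact h (X_injective (sub_eq_zero.mp h0))

lemma sw_dvd (i : ℕ) (f : MvPolynomial ℕ ℤ) : (X i - X (i + 1)) ∣ f - sw i f := by
  induction f using MvPolynomial.induction_on with
  | C a => simp [sw]
  | add p q hp hq =>
    have := dvd_add hp hq
    rw [map_add]
    convert this using 1; ring
  | mul_X p j hp =>
    have h2 : (X i - X (i + 1) : MvPolynomial ℕ ℤ) ∣ X j - sw i (X j) := by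
      by_cases h : j = i
      · subst h; rw [sw_X_self]
      · by_cases h' : j = i + 1
        · subst h'; rw [sw_X_succ]; exact ⟨-1, by ring⟩
        · rw [sw_X_of_ne i j h h']; simp
    have := dvd_add (hp.mul_right (X j)) (h2.mul_left (sw i p))
    rw [map_mul]
    convert this using 1; ring

/-- The Demazure operator `π_i f = ∂_i (x_i f)`. -/
noncomputable def pI (i : ℕ) (f : MvPolynomial ℕ ℤ) : MvPolynomial ℕ ℤ :=
  Classical.choose (sw_dvd i (X i * f))

lemma pI_spec (i : ℕ) (f : MvPolynomial ℕ ℤ) :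
    (X i - X (i + 1)) * pI i f = X i * f - X (i + 1) * sw i f := by
  have := Classical.choose_spec (sw_dvd i (X i * f))
  exact this.symm.trans (by rw [map_mul, sw_X_self])

lemma pI_unique (i : ℕ) (f g : MvPolynomial ℕ ℤ)
    (h : (X i - X (i + 1)) * g = X i * f - X (i + 1) * sw i f) : pI i f = g :=
  mul_left_cancel₀ (X_sub_ne i (i + 1) (by omega)) ((pI_spec i f).trans h.symm)

lemma pI_add (i : ℕ) (f g : MvPolynomial ℕ ℤ) : pI i (f + g) = pI i f + pI i g := by
  apply pI_unique
  rw [map_add, mul_add, pI_spec, pI_spec]; ring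

lemma pI_zero (i : ℕ) : pI i 0 = 0 := by
  apply pI_unique; simp

/-- `π_i` as an additive homomorphism. -/
noncomputable def pIHom (i : ℕ) : MvPolynomial ℕ ℤ →+ MvPolynomial ℕ ℤ where
  toFun := pI i
  map_zero' := pI_zero i
  map_add' := pI_add i

lemma pI_sum {ι : Type*} (i : ℕ) (s : Finset ι) (f : ι → MvPolynomial ℕ ℤ) :
    pI i (∑ j ∈ s, f j) = ∑ j ∈ s, pI i (f j) := map_sum (pIHom i) f s

lemma pI_mul (i : ℕ) (h f : MvPolynomial ℕ ℤ) (hh : sw i h = h) :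
    pI i (h * f) = h * pI i f := by
  apply pI_unique
  rw [map_mul, hh]
  linear_combination h * pI_spec i f

lemma pI_of_sym (i : ℕ) (h : MvPolynomial ℕ ℤ) (hh : sw i h = h) : pI i h = h := by
  apply pI_unique; rw [hh]; ring

lemma sw_pI (i : ℕ) (f : MvPolynomial ℕ ℤ) : sw i (pI i f) = pI i f := by
  symm
  apply pI_unique
  have := congrArg (sw i) (pI_spec i f)
  simp only [map_mul, map_sub, sw_X_self, sw_X_succ, sw_sw] at this
  linear_combination -this

lemma pI_pI (i : ℕ) (f : MvPolynomial ℕ ℤ) : pI i (pI i f) = pI i f :=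
  pI_of_sym i _ (sw_pI i f)

lemma sw_comm (i j : ℕ) (h : i + 1 < j ∨ j + 1 < i) (f : MvPolynomial ℕ ℤ) :
    sw i (sw j f) = sw j (sw i f) := by
  simp only [sw, rename_rename]
  congr 2
  funext k
  simp only [Function.comp, Equiv.swap_apply_def]
  split_ifs <;> omega

lemma sw_pI_comm (i j : ℕ) (h : i + 1 < j ∨ j + 1 < i) (f : MvPolynomial ℕ ℤ) :
    sw i (pI j f) = pI j (sw i f) := by
  symm
  apply pI_unique
  have := congrArg (sw i) (pI_spec j f)
  simp only [map_mul, map_sub, sw_X_of_ne i j (by omega) (by omega),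
    sw_X_of_ne i (j+1) (by omega) (by omega)] at this
  rw [sw_comm i j h] at this
  exact this

lemma sw_braid (i : ℕ) (f : MvPolynomial ℕ ℤ) :
    sw i (sw (i+1) (sw i f)) = sw (i+1) (sw i (sw (i+1) f)) := by
  simp only [sw, rename_rename]
  congr 2
  funext k
  simp only [Function.comp, Equiv.swap_apply_def]
  split_ifs <;> omega

lemma pI_braid (i : ℕ) (f : MvPolynomial ℕ ℤ) :
    pI i (pI (i+1) (pI i f)) = pI (i+1) (pI i (pI (i+1) f)) := by
  have s3 : sw i (X (i+2)) = X (i+2) := sw_X_of_ne _ _ (by omega) (by omega)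
  have t1 : sw (i+1) (X i) = X i := sw_X_of_ne _ _ (by omega) (by omega)
  have t2 : sw (i+1) (X (i+1)) = X (i+2) := sw_X_self _
  have t3 : sw (i+1) (X (i+2)) = X (i+1) := sw_X_succ _
  have n1 := X_sub_ne i (i+1) (by omega)
  have n2 := X_sub_ne (i+1) (i+2) (by omega)
  have n3 := X_sub_ne i (i+2) (by omega)
  -- left
  have a1 := pI_spec i f
  have a2 := pI_spec (i+1) (pI i f)
  have a3 := pI_spec i (pI (i+1) (pI i f))
  have ta1 := congrArg (sw (i+1)) a1
  simp only [map_mul, map_sub, t1, t2] at ta1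
  have sa2 := congrArg (sw i) a2
  simp only [map_mul, map_sub, sw_X_self, sw_X_succ, s3] at sa2
  rw [show i + 1 + 1 = i + 2 from rfl] at *
  simp only [s3, sw_pI] at sa2
  have sta1 := congrArg (sw i) ta1
  simp only [map_mul, map_sub, sw_X_self, sw_X_succ, s3] at sta1
  -- right
  have b1 := pI_spec (i+1) f
  have b2 := pI_spec i (pI (i+1) f)
  have b3 := pI_spec (i+1) (pI i (pI (i+1) f))
  have sb1 := congrArg (sw i) b1
  rw [show i + 1 + 1 = i + 2 from rfl] at *
  simp only [map_mul, map_sub, sw_X_self, sw_X_succ, s3] at sb1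
  have tb2 := congrArg (sw (i+1)) b2
  simp only [map_mul, map_sub, t1, t2, t3, sw_pI] at tb2
  have tsb1 := congrArg (sw (i+1)) sb1
  simp only [map_mul, map_sub, t1, t2, t3] at tsb1
  rw [sw_braid] at sta1
  generalize pI i (pI (i+1) (pI i f)) = L at *
  generalize pI (i+1) (pI i (pI (i+1) f)) = R at *
  generalize sw i (pI (i+1) (pI i f)) = sB at *
  generalize (pI (i+1) (pI i f)) = B at *
  generalize sw i (sw (i+1) (pI i f)) = stA at *
  generalize sw (i+1) (pI i f) = tA at *
  generalize pI i f = A at *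
  generalize sw (i+1) (pI i (pI (i+1) f)) = tB' at *
  generalize (pI i (pI (i+1) f)) = B' at *
  generalize sw (i+1) (sw i (pI (i+1) f)) = tsA' at *
  generalize sw i (pI (i+1) f) = sA' at *
  generalize pI (i+1) f = A' at *
  generalize sw (i+1) (sw i (sw (i+1) f)) = f6 at *
  generalize (sw i (sw (i+1) f)) = f5 at *
  generalize (sw (i+1) (sw i f)) = f4 at *
  generalize sw i f = f3 at *
  generalize sw (i+1) f = f2 at *
  generalize (X i : MvPolynomial ℕ ℤ) = x at *
  generalize (X (i+1) : MvPolynomial ℕ ℤ) = y at *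
  generalize (X (i+2) : MvPolynomial ℕ ℤ) = z at *
  have e1 : (x-y)*(x-z)*(y-z)*B = (x-z)*y*(x*f-y*f3) - z*(x-y)*(x*f2-z*f4) := by
    linear_combination (x-y)*(x-z)*a2 + (x-z)*y*a1 - z*(x-y)*ta1
  have e2 : (x-y)*(y-z)*(x-z)*sB = (y-z)*x*(x*f-y*f3) - z*(x-y)*(y*f5-z*f6) := by
    linear_combination (x-y)*(y-z)*sa2 + (y-z)*x*a1 - z*(x-y)*sta1
  have e3 : (x-y)*(x-z)*(y-z)*L = x^2*y*f - x*y^2*f3 - x^2*z*f2 + x*z^2*f4 + y^2*z*f5 - y*z^2*f6 := by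
    apply mul_left_cancel₀ n1
    linear_combination (x-y)*(x-z)*(y-z)*a3 + x*e1 - y*e2
  have e4 : (x-y)*(x-z)*(y-z)*B' = (x-z)*x*(y*f-z*f2) - y*(y-z)*(x*f3-z*f5) := by
    linear_combination (y-z)*(x-z)*b2 + (x-z)*x*b1 - y*(y-z)*sb1
  have e5 : (x-y)*(y-z)*(x-z)*tB' = (x-y)*x*(y*f-z*f2) - z*(y-z)*(x*f4-y*f6) := by
    linear_combination (x-y)*(y-z)*tb2 + (x-y)*x*b1 - z*(y-z)*tsb1
  have e6 : (x-y)*(x-z)*(y-z)*R = x^2*y*f - x*y^2*f3 - x^2*z*f2 + x*z^2*f4 + y^2*z*f5 - y*z^2*f6 := by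
    apply mul_left_cancel₀ n2
    linear_combination (x-y)*(x-z)*(y-z)*b3 + y*e4 - z*e5
  exact mul_left_cancel₀ (mul_ne_zero (mul_ne_zero n1 n3) n2) (e3.trans e6.symm)

lemma pI_pow (i a b : ℕ) (h : b ≤ a) (m : MvPolynomial ℕ ℤ) (hm : sw i m = m) :
    pI i (X i ^ a * (X (i+1) ^ b * m)) =
      ∑ c ∈ Finset.Icc b a, X i ^ (a + b - c) * (X (i+1) ^ c * m) := by
  induction a, h using Nat.le_induction with
  | base =>
    rw [pI_of_sym]
    · simp
    · simp only [map_mul, map_pow, sw_X_self, sw_X_succ, hm]; ring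
  | succ a hab ih =>
    rw [← Finset.insert_Icc_right_eq_Icc_add_one (by omega), Finset.sum_insert (by simp)]
    have : ∑ c ∈ Finset.Icc b a, X i ^ (a + 1 + b - c) * (X (i+1) ^ c * m)
      = X i * ∑ c ∈ Finset.Icc b a, X i ^ (a + b - c) * (X (i+1) ^ c * m) := by
      rw [Finset.mul_sum]
      refine Finset.sum_congr rfl fun c hc => ?_
      rw [Finset.mem_Icc] at hc
      rw [show a + 1 + b - c = (a + b - c) + 1 by omega]; ring
    rw [this, ← ih]
    apply pI_unique
    have := pI_spec i (X i ^ a * (X (i+1) ^ b * m))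
    simp only [map_mul, map_pow, sw_X_self, sw_X_succ, hm] at this ⊢
    rw [show a + 1 + b - (a+1) = b by omega]
    linear_combination X i * this

/-- The defining properties of the family of key polynomials. -/
def IsKey (Key : (ℕ →₀ ℕ) → MvPolynomial ℕ ℤ) : Prop :=
  (∀ α : ℕ →₀ ℕ, (∀ i j : ℕ, i ≤ j → α j ≤ α i) → Key α = monomial α 1) ∧
  (∀ (α : ℕ →₀ ℕ) (i : ℕ), α i < α (i + 1) →
      (X i - X (i + 1)) * Key α =
        X i * Key (Finsupp.equivMapDomain (Equiv.swap i (i + 1)) α) -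
          rename (Equiv.swap i (i + 1))
            (X i * Key (Finsupp.equivMapDomain (Equiv.swap i (i + 1)) α)))

/-- Swap entries `i`, `i+1` of a composition. -/
def swp (i : ℕ) (α : ℕ →₀ ℕ) : ℕ →₀ ℕ := Finsupp.equivMapDomain (Equiv.swap i (i + 1)) α

lemma swp_apply (i : ℕ) (α : ℕ →₀ ℕ) (k : ℕ) : swp i α k = α (Equiv.swap i (i + 1) k) := by
  simp [swp]

lemma swp_self (i : ℕ) (α : ℕ →₀ ℕ) : swp i α i = α (i + 1) := by simp [swp]
lemma swp_succ (i : ℕ) (α : ℕ →₀ ℕ) : swp i α (i + 1) = α i := by simp [swp]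
lemma swp_ne (i : ℕ) (α : ℕ →₀ ℕ) (k : ℕ) (h : k ≠ i) (h' : k ≠ i + 1) : swp i α k = α k := by
  simp [swp, Equiv.swap_apply_of_ne_of_ne h h']

lemma swp_swp (i : ℕ) (α : ℕ →₀ ℕ) : swp i (swp i α) = α := by
  ext k; simp [swp_apply]

lemma swp_add (i : ℕ) (α β : ℕ →₀ ℕ) : swp i (α + β) = swp i α + swp i β := by
  ext k; simp [swp_apply]

/-- The part of a composition away from `i`, `i+1`. -/
noncomputable def rst (i : ℕ) (α : ℕ →₀ ℕ) : ℕ →₀ ℕ := (α.erase i).erase (i + 1)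

lemma rst_apply (i : ℕ) (α : ℕ →₀ ℕ) (k : ℕ) :
    rst i α k = if k = i ∨ k = i + 1 then 0 else α k := by
  unfold rst
  by_cases h : k = i + 1
  · simp [h]
  · by_cases h' : k = i
    · simp [h']
    · simp [h, h']

lemma decomp (i : ℕ) (α : ℕ →₀ ℕ) :
    α = Finsupp.single i (α i) + (Finsupp.single (i + 1) (α (i + 1)) + rst i α) := by
  ext k
  simp only [Finsupp.add_apply, rst_apply, Finsupp.single_apply]
  by_cases h : k = i
  · subst h; simp
  · by_cases h' : k = i + 1
    · subst h'; simp
    · simp [h, h', Ne.symm h, Ne.symm h']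

lemma swp_of_eq (i : ℕ) (α : ℕ →₀ ℕ) (h : α i = α (i + 1)) : swp i α = α := by
  ext k
  by_cases h1 : k = i
  · subst h1; rw [swp_self, h]
  · by_cases h2 : k = i + 1
    · subst h2; rw [swp_succ, h]
    · rw [swp_ne _ _ _ h1 h2]

/-- Induction measure. -/
def wt (α : ℕ →₀ ℕ) : ℕ := α.sum fun i a => i * a

lemma wt_add (α β : ℕ →₀ ℕ) : wt (α + β) = wt α + wt β := by
  unfold wt
  rw [Finsupp.sum_add_index'] <;> intros <;> ring

lemma wt_single (i a : ℕ) : wt (Finsupp.single i a) = i * a := by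
  simp [wt]

lemma wt_swp (i : ℕ) (α : ℕ →₀ ℕ) (h : α i < α (i + 1)) : wt (swp i α) < wt α := by
  have hr : rst i (swp i α) = rst i α := by
    ext k
    rw [rst_apply, rst_apply]
    split_ifs with h
    · rfl
    · rw [swp_ne] <;> tauto
  have e1 := congrArg wt (decomp i α)
  have e2 := congrArg wt (decomp i (swp i α))
  rw [hr, swp_self, swp_succ] at e2
  simp only [wt_add, wt_single] at e1 e2
  nlinarith

lemma sw_monomial (i : ℕ) (α : ℕ →₀ ℕ) (c : ℤ) :
    sw i (monomial α c) = monomial (swp i α) c := by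
  simp [sw, rename_monomial, swp, Finsupp.equivMapDomain_eq_mapDomain]

lemma monomial_decomp (i : ℕ) (α : ℕ →₀ ℕ) :
    (monomial α 1 : MvPolynomial ℕ ℤ) =
      X i ^ α i * (X (i + 1) ^ α (i + 1) * monomial (rst i α) 1) := by
  conv_lhs => rw [decomp i α]
  simp [X_pow_eq_monomial, monomial_mul]

lemma sw_rst (i : ℕ) (α : ℕ →₀ ℕ) (c : ℤ) :
    sw i (monomial (rst i α) c) = monomial (rst i α) c := by
  rw [sw_monomial, swp_of_eq]
  simp [rst_apply]

lemma key_rec {Key} (hK : IsKey Key) (α : ℕ →₀ ℕ) (i : ℕ) (h : α i < α (i + 1)) :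
    Key α = pI i (Key (swp i α)) := by
  symm
  apply pI_unique
  rw [hK.2 α i h]
  change X i * Key (swp i α) - sw i (X i * Key (swp i α)) = _
  rw [map_mul, sw_X_self]

lemma exists_ascent (α : ℕ →₀ ℕ) (h : ¬ ∀ i j : ℕ, i ≤ j → α j ≤ α i) :
    ∃ i, α i < α (i + 1) := by
  by_contra hc
  push Not at hc
  exact h fun i j hij => antitone_nat_of_succ_le hc hij

lemma key_sym_eq {Key} (hK : IsKey Key) (α : ℕ →₀ ℕ) :
    ∀ i, α i = α (i + 1) → sw i (Key α) = Key α := by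
  induction hm : wt α using Nat.strong_induction_on generalizing α with
  | _ m ih =>
  subst hm
  intro i hi
  by_cases hd : ∀ i j : ℕ, i ≤ j → α j ≤ α i
  · rw [hK.1 α hd, sw_monomial, swp_of_eq i α hi]
  obtain ⟨j, hj⟩ := exists_ascent α hd
  have hw := wt_swp j α hj
  rw [key_rec hK α j hj]
  have hji : j ≠ i := by rintro rfl; omega
  by_cases h1 : j = i + 1
  · subst h1
    have h2 : swp (i+1) α i < swp (i+1) α (i+1) := by
      rw [swp_ne _ _ i (by omega) (by omega), swp_self]; omega
    have hw2 := wt_swp i _ h2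
    rw [key_rec hK _ i h2]
    have h3 := ih _ (by omega) (swp i (swp (i+1) α)) rfl (i+1) (by
      rw [swp_succ, swp_ne _ _ (i+1+1) (by omega) (by omega), swp_succ,
        swp_ne _ _ i (by omega) (by omega)]; exact hi)
    have h4 := pI_braid i (Key (swp i (swp (i+1) α)))
    rw [pI_of_sym (i+1) _ h3] at h4
    rw [← h4, sw_pI]
  by_cases h1' : i = j + 1
  · subst h1'
    have h2 : swp j α (j+1) < swp j α (j+1+1) := by
      rw [swp_ne _ _ (j+1+1) (by omega) (by omega), swp_succ]; omega
    have hw2 := wt_swp (j+1) _ h2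
    rw [key_rec hK _ (j+1) h2]
    have h3 := ih _ (by omega) (swp (j+1) (swp j α)) rfl j (by
      rw [swp_self, swp_ne _ _ j (by omega) (by omega), swp_self,
        swp_ne _ _ (j+1+1) (by omega) (by omega)]; exact hi)
    have h4 := pI_braid j (Key (swp (j+1) (swp j α)))
    rw [pI_of_sym j _ h3] at h4
    rw [h4, sw_pI]
  · rw [sw_pI_comm i j (by omega)]
    rw [ih _ hw (swp j α) rfl i (by
      rw [swp_ne _ _ i (by omega) (by omega), swp_ne _ _ (i+1) (by omega) (by omega)]; exact hi)]

lemma key_sym {Key} (hK : IsKey Key) (α : ℕ →₀ ℕ) (i : ℕ) (h : α i ≤ α (i + 1)) :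
    sw i (Key α) = Key α := by
  rcases h.eq_or_lt with h | h
  · exact key_sym_eq hK α i h
  · rw [key_rec hK α i h, sw_pI]

/-- `0`-Hecke action on compositions. -/
def hk (i : ℕ) (α : ℕ →₀ ℕ) : ℕ →₀ ℕ := if α i ≤ α (i + 1) then α else swp i α

lemma hk_le (i : ℕ) (α : ℕ →₀ ℕ) : hk i α i ≤ hk i α (i + 1) := by
  unfold hk
  split_ifs with h
  · exact h
  · rw [swp_self, swp_succ]; omega

lemma hk_ne (i : ℕ) (α : ℕ →₀ ℕ) (k : ℕ) (h : k ≠ i) (h' : k ≠ i + 1) : hk i α k = α k := by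
  unfold hk
  split_ifs
  · rfl
  · exact swp_ne _ _ _ h h'

lemma pI_key {Key} (hK : IsKey Key) (α : ℕ →₀ ℕ) (i : ℕ) : pI i (Key α) = Key (hk i α) := by
  unfold hk
  split_ifs with h
  · exact pI_of_sym _ _ (key_sym hK α i h)
  · rw [key_rec hK (swp i α) i (by rw [swp_self, swp_succ]; omega), swp_swp]

/-- Dominance order on finite sets, through counting. -/
def DL (R S : Finset ℕ) : Prop :=
  R.card = S.card ∧ ∀ k, Nat.count (· ∈ S) k ≤ Nat.count (· ∈ R) k

/-- Swap `i` and `i+1` in a finite set. -/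
def fl (i : ℕ) (R : Finset ℕ) : Finset ℕ := R.map (Equiv.swap i (i + 1)).toEmbedding

lemma mem_fl (i : ℕ) (R : Finset ℕ) (k : ℕ) : k ∈ fl i R ↔ Equiv.swap i (i + 1) k ∈ R := by
  unfold fl
  rw [Finset.mem_map_equiv, Equiv.symm_swap]

lemma mem_fl_self (i : ℕ) (R : Finset ℕ) : i ∈ fl i R ↔ i + 1 ∈ R := by simp [mem_fl]
lemma mem_fl_succ (i : ℕ) (R : Finset ℕ) : i + 1 ∈ fl i R ↔ i ∈ R := by simp [mem_fl]
lemma mem_fl_ne (i : ℕ) (R : Finset ℕ) (k : ℕ) (h : k ≠ i) (h' : k ≠ i + 1) :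
    k ∈ fl i R ↔ k ∈ R := by
  rw [mem_fl, Equiv.swap_apply_of_ne_of_ne h h']

lemma card_fl (i : ℕ) (R : Finset ℕ) : (fl i R).card = R.card := by simp [fl]

lemma count_fl_le (i : ℕ) (R : Finset ℕ) (k : ℕ) (h : k ≤ i) :
    Nat.count (· ∈ fl i R) k = Nat.count (· ∈ R) k := by
  induction k with
  | zero => simp
  | succ k ih =>
    rw [Nat.count_succ, Nat.count_succ, ih (by omega)]
    simp only [mem_fl_ne i R k (by omega) (by omega)]

lemma count_fl_succ (i : ℕ) (R : Finset ℕ) :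
    Nat.count (· ∈ fl i R) (i + 1) = Nat.count (· ∈ R) i + if i + 1 ∈ R then 1 else 0 := by
  rw [Nat.count_succ, count_fl_le i R i le_rfl]
  simp only [mem_fl_self]

lemma count_fl_ge (i : ℕ) (R : Finset ℕ) (k : ℕ) (h : i + 2 ≤ k) :
    Nat.count (· ∈ fl i R) k = Nat.count (· ∈ R) k := by
  induction k, h using Nat.le_induction with
  | base =>
    rw [Nat.count_succ, count_fl_succ, Nat.count_succ, Nat.count_succ]
    simp only [mem_fl_succ]; omega
  | succ k hk ih =>
    rw [Nat.count_succ, Nat.count_succ, ih]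
    simp only [mem_fl_ne i R k (by omega) (by omega)]

lemma DL_fl (i : ℕ) (C D : Finset ℕ) (hD : i ∈ D → i + 1 ∈ D) (h : DL C D) : DL (fl i C) D := by
  refine ⟨by rw [card_fl, h.1], fun k => ?_⟩
  rcases lt_trichotomy k (i + 1) with hk | rfl | hk
  · rw [count_fl_le _ _ _ (by omega)]; exact h.2 k
  · have h0 := h.2 i
    have h2 := h.2 (i + 1 + 1)
    rw [count_fl_succ]
    simp only [Nat.count_succ] at *
    split_ifs at * <;> first | omega | tauto
  · rw [count_fl_ge _ _ _ (by omega)]; exact h.2 k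

lemma DL_down (i : ℕ) (C D : Finset ℕ) (hD : i ∈ D → i + 1 ∈ D) (hC : i + 1 ∈ C → i ∈ C)
    (h : DL C D) : DL C (fl i D) := by
  refine ⟨by rw [card_fl, h.1], fun k => ?_⟩
  rcases lt_trichotomy k (i + 1) with hk | rfl | hk
  · rw [count_fl_le _ _ _ (by omega)]; exact h.2 k
  · have h0 := h.2 i
    have h2 := h.2 (i + 1 + 1)
    rw [count_fl_succ]
    simp only [Nat.count_succ] at *
    split_ifs at * <;> first | omega | tauto
  · rw [count_fl_ge _ _ _ (by omega)]; exact h.2 k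

lemma DL_up (i : ℕ) (C D : Finset ℕ) (hD : i ∈ D → i + 1 ∈ D)
    (h : DL C (fl i D)) : DL C D := by
  refine ⟨by rw [h.1, card_fl], fun k => ?_⟩
  have h1 := h.2 k
  rcases lt_trichotomy k (i + 1) with hk | rfl | hk
  · rwa [count_fl_le _ _ _ (by omega)] at h1
  · rw [count_fl_succ] at h1
    simp only [Nat.count_succ] at *
    split_ifs at * <;> first | omega | tauto
  · rwa [count_fl_ge _ _ _ (by omega)] at h1

/-- Column `j` of the skyline diagram. -/
def Col (α : ℕ →₀ ℕ) (j : ℕ) : Finset ℕ := α.support.filter (fun i => j < α i)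

lemma mem_Col (α : ℕ →₀ ℕ) (i j : ℕ) : i ∈ Col α j ↔ j < α i := by
  simp [Col]; omega

lemma Col_swp (α : ℕ →₀ ℕ) (i j : ℕ) : Col (swp i α) j = fl i (Col α j) := by
  ext k; rw [mem_fl, mem_Col, mem_Col, swp_apply]

/-- The combinatorial support set. -/
def SS (J : ℕ) (α d : ℕ →₀ ℕ) : Prop :=
  ∃ C : ℕ → Finset ℕ, (∀ j < J, DL (C j) (Col α j)) ∧
    ∀ i, d i = ((Finset.range J).filter fun j => i ∈ C j).card

/-- `d` lies on the `i`-segment spanned by `d'`. -/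
def Seg (i : ℕ) (d' d : ℕ →₀ ℕ) : Prop :=
  (∀ k, k ≠ i → k ≠ i + 1 → d k = d' k) ∧ d i + d (i + 1) = d' i + d' (i + 1) ∧
    min (d' i) (d' (i + 1)) ≤ d i ∧ min (d' i) (d' (i + 1)) ≤ d (i + 1)

/-- columns containing exactly one of `i`, `i+1` -/
def Pc (i J : ℕ) (C : ℕ → Finset ℕ) : Finset ℕ :=
  (Finset.range J).filter fun j => ¬ (i ∈ C j ↔ i + 1 ∈ C j)
/-- columns containing both `i`, `i+1` -/
def Bc (i J : ℕ) (C : ℕ → Finset ℕ) : Finset ℕ :=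
  (Finset.range J).filter fun j => i ∈ C j ∧ i + 1 ∈ C j

lemma Pc_Bc (i J : ℕ) (C : ℕ → Finset ℕ) : Disjoint (Bc i J C) (Pc i J C) := by
  rw [Finset.disjoint_left]; intro j; simp [Pc, Bc]; tauto

lemma card_i (i J : ℕ) (C : ℕ → Finset ℕ) :
    Bc i J C = ((Finset.range J).filter fun j => i ∈ C j) ∩
      ((Finset.range J).filter fun j => i + 1 ∈ C j) ∧
    ((Finset.range J).filter fun j => i ∈ C j).card +
      ((Finset.range J).filter fun j => i + 1 ∈ C j).card =
      2 * (Bc i J C).card + (Pc i J C).card := by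
  have h1 : Bc i J C = ((Finset.range J).filter fun j => i ∈ C j) ∩
      ((Finset.range J).filter fun j => i + 1 ∈ C j) := by
    ext j; simp [Bc]; tauto
  have h2 : Bc i J C ∪ Pc i J C = ((Finset.range J).filter fun j => i ∈ C j) ∪
      ((Finset.range J).filter fun j => i + 1 ∈ C j) := by
    ext j; simp [Bc, Pc]; tauto
  refine ⟨h1, ?_⟩
  rw [← Finset.card_union_add_card_inter, ← h1, ← h2,
    Finset.card_union_of_disjoint (Pc_Bc i J C)]
  ring

lemma flipcols (i J : ℕ) (C : ℕ → Finset ℕ) (U : Finset ℕ) (hU : U ⊆ Pc i J C) :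
    ∃ C' : ℕ → Finset ℕ, (∀ j, C' j = C j ∨ C' j = fl i (C j)) ∧
      ((Finset.range J).filter fun j => i ∈ C' j) = Bc i J C ∪ U ∧
      ((Finset.range J).filter fun j => i + 1 ∈ C' j) = Bc i J C ∪ (Pc i J C \ U) := by
  classical
  refine ⟨fun j => if (j ∈ U ↔ i ∈ C j) ∨ j ∉ Pc i J C then C j else fl i (C j), ?_, ?_, ?_⟩
  · intro j; dsimp only; split_ifs <;> tauto
  · ext j
    have := @hU j
    simp only [Finset.mem_filter, Finset.mem_union, Bc, Pc] at *
    split_ifs with h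
    · tauto
    · simp only [mem_fl_self]; tauto
  · ext j
    have := @hU j
    simp only [Finset.mem_filter, Finset.mem_union, Finset.mem_sdiff, Bc, Pc] at *
    split_ifs with h
    · tauto
    · simp only [mem_fl_succ]; tauto

lemma mem_of_flip (i k : ℕ) (h : k ≠ i) (h' : k ≠ i + 1) (R R' : Finset ℕ)
    (hR : R' = R ∨ R' = fl i R) : k ∈ R' ↔ k ∈ R := by
  rcases hR with rfl | rfl
  · rfl
  · exact mem_fl_ne i R k h h'

lemma SS_seg (J : ℕ) (α : ℕ →₀ ℕ) (i : ℕ) (hα : α i ≤ α (i + 1)) (d d' : ℕ →₀ ℕ)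
    (hd : SS J α d) (hs : Seg i d d') : SS J α d' := by
  obtain ⟨C, hC, hdC⟩ := hd
  obtain ⟨hs1, hs2, hs3, hs4⟩ := hs
  obtain ⟨hB, hc⟩ := card_i i J C
  have hb1 : (Bc i J C).card ≤ d i := by
    rw [hdC, hB]; exact Finset.card_le_card Finset.inter_subset_left
  have hb2 : (Bc i J C).card ≤ d (i + 1) := by
    rw [hdC, hB]; exact Finset.card_le_card Finset.inter_subset_right
  rw [← hdC, ← hdC] at hc
  obtain ⟨U, hU, hUc⟩ := Finset.exists_subset_card_eq
    (show d' i - (Bc i J C).card ≤ (Pc i J C).card by omega)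
  obtain ⟨C', h1, h2, h3⟩ := flipcols i J C U hU
  refine ⟨C', fun j hj => ?_, fun k => ?_⟩
  · rcases h1 j with h | h
    · rw [h]; exact hC j hj
    · rw [h]; exact DL_fl i _ _ (by rw [mem_Col, mem_Col]; omega) (hC j hj)
  · by_cases hk : k = i
    · subst hk
      rw [h2, Finset.card_union_of_disjoint ((Pc_Bc k J C).mono_right hU)]
      omega
    · by_cases hk' : k = i + 1
      · subst hk'
        rw [h3, Finset.card_union_of_disjoint ((Pc_Bc i J C).mono_right Finset.sdiff_subset),
          Finset.card_sdiff_of_subset hU]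
        omega
      · rw [hs1 k hk hk', hdC]
        congr 1
        ext j
        simp only [Finset.mem_filter, mem_of_flip i k hk hk' _ _ (h1 j)]

lemma SS_up (J : ℕ) (α : ℕ →₀ ℕ) (i : ℕ) (hα : α i ≤ α (i + 1)) (d : ℕ →₀ ℕ)
    (hd : SS J (swp i α) d) : SS J α d := by
  obtain ⟨C, hC, hdC⟩ := hd
  refine ⟨C, fun j hj => ?_, hdC⟩
  have := hC j hj
  rw [Col_swp] at this
  exact DL_up i _ _ (by rw [mem_Col, mem_Col]; omega) this

lemma SS_hk (J : ℕ) (α : ℕ →₀ ℕ) (i : ℕ) (d : ℕ →₀ ℕ)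
    (hd : SS J α d) : SS J (hk i α) d := by
  have h := hk_le i α
  unfold hk at *
  split_ifs at * with h1
  · exact hd
  · apply SS_up _ _ i h
    rwa [swp_swp]

lemma SS_top (J : ℕ) (α : ℕ →₀ ℕ) (i : ℕ) (hα : α i ≤ α (i + 1)) (d : ℕ →₀ ℕ)
    (hd : SS J α d) : ∃ d', SS J (swp i α) d' ∧ Seg i d' d := by
  obtain ⟨C, hC, hdC⟩ := hd
  obtain ⟨hB, hc⟩ := card_i i J C
  have hb1 : (Bc i J C).card ≤ d i := by
    rw [hdC, hB]; exact Finset.card_le_card Finset.inter_subset_left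
  have hb2 : (Bc i J C).card ≤ d (i + 1) := by
    rw [hdC, hB]; exact Finset.card_le_card Finset.inter_subset_right
  rw [← hdC, ← hdC] at hc
  obtain ⟨C', h1, h2, h3⟩ := flipcols i J C _ subset_rfl
  rw [sdiff_self, Finset.bot_eq_empty, Finset.union_empty] at h3
  set d' : ℕ →₀ ℕ := Finsupp.single i ((Bc i J C).card + (Pc i J C).card) +
    (Finsupp.single (i + 1) (Bc i J C).card + rst i d) with hd'
  have e1 : d' i = (Bc i J C).card + (Pc i J C).card := by simp [hd', rst_apply]
  have e2 : d' (i + 1) = (Bc i J C).card := by simp [hd', rst_apply]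
  have e3 : ∀ k, k ≠ i → k ≠ i + 1 → d' k = d k := by
    intro k hk hk'
    simp [hd', rst_apply, hk, hk', Finsupp.single_apply, Ne.symm hk, Ne.symm hk']
  refine ⟨d', ⟨C', fun j hj => ?_, fun k => ?_⟩, fun k hk hk' => (e3 k hk hk').symm, ?_, ?_, ?_⟩
  · have hD : i ∈ Col α j → i + 1 ∈ Col α j := by rw [mem_Col, mem_Col]; omega
    rw [Col_swp]
    apply DL_down i _ _ hD
    · intro h
      have : j ∈ (Finset.range J).filter fun j => i + 1 ∈ C' j := by simp [hj, h]
      rw [h3] at this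
      have : j ∈ (Finset.range J).filter fun j => i ∈ C' j := by
        rw [h2]; exact Finset.mem_union_left _ this
      simp only [Finset.mem_filter] at this
      exact this.2
    · rcases h1 j with h | h
      · rw [h]; exact hC j hj
      · rw [h]; exact DL_fl i _ _ hD (hC j hj)
  · by_cases hk : k = i
    · subst hk
      rw [h2, Finset.card_union_of_disjoint (Pc_Bc k J C), e1]
    · by_cases hk' : k = i + 1
      · subst hk'
        rw [h3, e2]
      · rw [e3 k hk hk', hdC]
        congr 1
        ext j
        simp only [Finset.mem_filter, mem_of_flip i k hk hk' _ _ (h1 j)]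
  · rw [e1, e2]; omega
  · rw [e1, e2]; omega
  · rw [e1, e2]; omega

lemma SS_refl (J : ℕ) (α : ℕ →₀ ℕ) (h : ∀ i, α i ≤ J) : SS J α α := by
  refine ⟨Col α, fun j _ => ⟨rfl, fun _ => le_rfl⟩, fun i => ?_⟩
  have : ((Finset.range J).filter fun j => i ∈ Col α j) = Finset.range (α i) := by
    ext j
    have := h i
    simp only [Finset.mem_filter, mem_Col, Finset.mem_range]; omega
  rw [this, Finset.card_range]

lemma DL_range (C : Finset ℕ) (m : ℕ) (h : DL C (Finset.range m)) : C = Finset.range m := by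
  have h1 := h.2 m
  have h2 : Nat.count (· ∈ Finset.range m) m = m := by
    rw [Nat.count_iff_forall]; simp
  have h3 : Nat.count (· ∈ C) m = m := le_antisymm (Nat.count_le _) (h2.symm.le.trans h1)
  rw [Nat.count_iff_forall] at h3
  symm
  apply Finset.eq_of_subset_of_card_le
  · intro k hk; exact h3 _ (Finset.mem_range.mp hk)
  · exact h.1.le

lemma Col_anti (α : ℕ →₀ ℕ) (hα : ∀ i j : ℕ, i ≤ j → α j ≤ α i) (j : ℕ) :
    ∃ m, Col α j = Finset.range m := by
  refine ⟨(Col α j).card, ?_⟩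
  have hlow : ∀ a ∈ Col α j, ∀ b ≤ a, b ∈ Col α j := by
    intro a ha b hb
    rw [mem_Col] at *
    have := hα b a hb; omega
  symm
  apply Finset.eq_of_subset_of_card_le
  · intro k hk
    by_contra hk'
    have : Col α j ⊆ Finset.range k := by
      intro a ha
      rw [Finset.mem_range]
      by_contra hak
      exact hk' (hlow a ha k (by omega))
    have := Finset.card_le_card this
    rw [Finset.card_range] at this
    rw [Finset.mem_range] at hk
    omega
  · simp

lemma SS_anti (J : ℕ) (α : ℕ →₀ ℕ) (h : ∀ i, α i ≤ J)
    (hα : ∀ i j : ℕ, i ≤ j → α j ≤ α i) (d : ℕ →₀ ℕ) (hd : SS J α d) : d = α := by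
  obtain ⟨C, hC, hdC⟩ := hd
  have hCC : ∀ j < J, C j = Col α j := by
    intro j hj
    obtain ⟨m, hm⟩ := Col_anti α hα j
    have := hC j hj
    rw [hm] at this ⊢
    exact DL_range _ _ this
  ext i
  rw [hdC]
  have : ((Finset.range J).filter fun j => i ∈ C j) = Finset.range (α i) := by
    ext j
    have := h i
    simp only [Finset.mem_filter, Finset.mem_range]
    constructor
    · rintro ⟨h1, h2⟩
      rwa [hCC j h1, mem_Col] at h2
    · intro h1
      have : j < J := by omega
      rw [hCC j this, mem_Col]; exact ⟨this, h1⟩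
  rw [this, Finset.card_range]

/-- Composite of Demazure operators along a word. -/
noncomputable def piW (w : List ℕ) (f : MvPolynomial ℕ ℤ) : MvPolynomial ℕ ℤ := w.foldr pI f

lemma piW_mul (w : List ℕ) (h f : MvPolynomial ℕ ℤ) (hh : ∀ i ∈ w, sw i h = h) :
    piW w (h * f) = h * piW w f := by
  induction w with
  | nil => rfl
  | cons i w ih =>
    change pI i (piW w (h * f)) = h * pI i (piW w f)
    rw [ih (fun j hj => hh j (by simp [hj])), pI_mul i _ _ (hh i (by simp))]

lemma piW_sum {ι : Type*} (w : List ℕ) (s : Finset ι) (f : ι → MvPolynomial ℕ ℤ) :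
    piW w (∑ j ∈ s, f j) = ∑ j ∈ s, piW w (f j) := by
  induction w with
  | nil => rfl
  | cons i w ih =>
    change pI i (piW w _) = ∑ j ∈ s, pI i (piW w (f j))
    rw [ih, pI_sum]

lemma piW_append (w : List ℕ) (i : ℕ) (f : MvPolynomial ℕ ℤ) :
    piW (w ++ [i]) f = piW w (pI i f) := by simp [piW]

lemma piW_key {Key} (hK : IsKey Key) (w : List ℕ) (α : ℕ →₀ ℕ) :
    piW w (Key α) = Key (w.foldr hk α) := by
  induction w with
  | nil => rfl
  | cons i w ih =>
    change pI i (piW w (Key α)) = Key (hk i (w.foldr hk α))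
    rw [ih, pI_key hK]

lemma hk_zero (n i : ℕ) (hi : i + 1 < n) (α : ℕ →₀ ℕ) (h : ∀ k ≥ n, α k = 0) :
    ∀ k ≥ n, hk i α k = 0 := by
  intro k hk
  rw [hk_ne _ _ _ (by omega) (by omega)]; exact h k hk

lemma foldr_hk_zero (n : ℕ) (w : List ℕ) (hw : ∀ i ∈ w, i + 1 < n) (α : ℕ →₀ ℕ)
    (h : ∀ k ≥ n, α k = 0) : ∀ k ≥ n, w.foldr hk α k = 0 := by
  induction w with
  | nil => exact h
  | cons i w ih =>
    exact hk_zero n i (hw i (by simp)) _ (ih (fun j hj => hw j (by simp [hj])))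

/-- `π_{r+m-1} ⋯ π_{r+1} π_r`. -/
noncomputable def Tn : ℕ → ℕ → MvPolynomial ℕ ℤ → MvPolynomial ℕ ℤ
  | 0, _, f => f
  | m + 1, r, f => Tn m (r + 1) (pI r f)

lemma Tn_mul (m r : ℕ) (h f : MvPolynomial ℕ ℤ) (hh : ∀ i, r ≤ i → sw i h = h) :
    Tn m r (h * f) = h * Tn m r f := by
  induction m generalizing r f with
  | zero => rfl
  | succ m ih =>
    simp only [Tn]
    rw [pI_mul r _ _ (hh r le_rfl), ih (r + 1) _ (fun i hi => hh i (by omega))]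

lemma Tn_sum {ι : Type*} (m r : ℕ) (s : Finset ι) (f : ι → MvPolynomial ℕ ℤ) :
    Tn m r (∑ j ∈ s, f j) = ∑ j ∈ s, Tn m r (f j) := by
  induction m generalizing r f with
  | zero => rfl
  | succ m ih =>
    simp only [Tn]
    rw [pI_sum, ih]

lemma sw_X_pow (i j a : ℕ) (h : j ≠ i) (h' : j ≠ i + 1) : sw i (X j ^ a) = X j ^ a := by
  rw [map_pow, sw_X_of_ne i j h h']

/-- Generating families for the branching rule. -/
def Gen (n r q : ℕ) : Set (ℕ → MvPolynomial ℕ ℤ) :=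
  {g | ∃ (k : ℕ) (w : List ℕ) (μ : ℕ →₀ ℕ), (∀ i ∈ w, r ≤ i ∧ i + 1 < n) ∧ (∀ i ≤ r, μ i = 0) ∧
    (∀ i ≥ n, μ i = 0) ∧ (∀ i j, r < i → i ≤ j → μ j ≤ μ i) ∧ μ (r + 1) ≤ q ∧
    g = fun a => X n ^ k * piW w (X r ^ a * monomial μ 1)}

lemma sum_reflect_identity (x y : MvPolynomial ℕ ℤ) (K : ℕ → MvPolynomial ℕ ℤ) (q p a : ℕ)
    (hqp : q ≤ p) :
    ∑ b ∈ Finset.Icc p a, x ^ (a + p - b) * ∑ c ∈ Finset.Icc q b, y ^ (b - c) * K c =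
    ∑ e ∈ Finset.Icc p a, y ^ (a - e) * (∑ b ∈ Finset.Icc p e, x ^ (e + p - b) * K b +
      x ^ e * ∑ c ∈ Finset.Ico q p, y ^ (p - c) * K c) := by
  have h1 : ∀ b ∈ Finset.Icc p a, x ^ (a + p - b) * ∑ c ∈ Finset.Icc q b, y ^ (b - c) * K c =
      ∑ c ∈ Finset.Icc p b, x ^ (a + p - b) * (y ^ (b - c) * K c) +
      ∑ c ∈ Finset.Ico q p, x ^ (a + p - b) * (y ^ (b - c) * K c) := by
    intro b hb
    rw [Finset.mem_Icc] at hb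
    rw [← Finset.mul_sum, ← Finset.mul_sum, ← mul_add]
    congr 1
    rw [add_comm, ← Finset.sum_union]
    · congr 1
      ext c; simp only [Finset.mem_union, Finset.mem_Icc, Finset.mem_Ico]; omega
    · rw [Finset.disjoint_left]
      intro c; simp only [Finset.mem_Icc, Finset.mem_Ico]; omega
  rw [Finset.sum_congr rfl h1, Finset.sum_add_distrib]
  simp only [mul_add, Finset.sum_add_distrib, Finset.mul_sum]
  congr 1
  · rw [Finset.sum_sigma', Finset.sum_sigma']
    refine Finset.sum_bij' (fun z _ => ⟨a + z.2 - z.1, z.2⟩) (fun z _ => ⟨a + z.2 - z.1, z.2⟩)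
      ?_ ?_ ?_ ?_ ?_
    · rintro ⟨b, c⟩ h
      simp only [Finset.mem_sigma, Finset.mem_Icc] at *; omega
    · rintro ⟨b, c⟩ h
      simp only [Finset.mem_sigma, Finset.mem_Icc] at *; omega
    · rintro ⟨b, c⟩ h
      simp only [Finset.mem_sigma, Finset.mem_Icc] at *
      congr 1; omega
    · rintro ⟨b, c⟩ h
      simp only [Finset.mem_sigma, Finset.mem_Icc] at *
      congr 1; omega
    · rintro ⟨b, c⟩ h
      simp only [Finset.mem_sigma, Finset.mem_Icc] at *
      rw [show a - (a + c - b) = b - c by omega, show a + c - b + p - c = a + p - b by omega]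
      ring
  · refine Finset.sum_bij' (fun b _ => a + p - b) (fun b _ => a + p - b) ?_ ?_ ?_ ?_ ?_
    · intro b hb; simp only [Finset.mem_Icc] at *; omega
    · intro b hb; simp only [Finset.mem_Icc] at *; omega
    · intro b hb; simp only [Finset.mem_Icc] at *; omega
    · intro b hb; simp only [Finset.mem_Icc] at *; omega
    · intro b hb
      simp only [Finset.mem_Icc] at *
      refine Finset.sum_congr rfl fun c hc => ?_
      simp only [Finset.mem_Ico] at hc
      rw [show b - c = (a - (a + p - b)) + (p - c) by omega, pow_add]
      ring

lemma mono_add_single (μ : ℕ →₀ ℕ) (i c : ℕ) :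
    (monomial (μ + Finsupp.single i c) 1 : MvPolynomial ℕ ℤ) = X i ^ c * monomial μ 1 := by
  rw [X_pow_eq_monomial, monomial_mul, one_mul, add_comm]

lemma gen_lift (n r q p : ℕ) (hqp : q ≤ p) (hr : r + 1 < n) (K : ℕ → MvPolynomial ℕ ℤ)
    (hK : K ∈ AddSubmonoid.closure (Gen n (r + 1) q)) :
    ∃ K' ∈ AddSubmonoid.closure (Gen n r p), ∀ e, p ≤ e →
      K' e = ∑ b ∈ Finset.Icc p e, X r ^ (e + p - b) * K b +
        X r ^ e * ∑ c ∈ Finset.Ico q p, X n ^ (p - c) * K c := by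
  induction hK using AddSubmonoid.closure_induction with
  | zero => exact ⟨0, AddSubmonoid.zero_mem _, by simp⟩
  | add K L _ _ hK hL =>
    obtain ⟨K', hK', eK⟩ := hK
    obtain ⟨L', hL', eL⟩ := hL
    refine ⟨K' + L', AddSubmonoid.add_mem _ hK' hL', fun e he => ?_⟩
    rw [Pi.add_apply, eK e he, eL e he]
    simp only [Pi.add_apply, mul_add, Finset.sum_add_distrib]
    ring
  | mem g hg =>
    obtain ⟨k, w, μ, hw, h0, hn, hanti, hq, rfl⟩ := hg
    have hsym : ∀ a, ∀ i ∈ w, sw i (X r ^ a) = X r ^ a := by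
      intro a i hi
      have := hw i hi
      exact sw_X_pow i r a (by omega) (by omega)
    have hmem : ∀ c, q ≤ c → c ≤ p → ∀ k' w', (∀ i ∈ w', r ≤ i ∧ i + 1 < n) →
        (fun a => X n ^ k' * piW w' (X r ^ a * monomial (μ + Finsupp.single (r+1) c) 1)) ∈
        AddSubmonoid.closure (Gen n r p) := by
      intro c hqc hcp k' w' hw'
      apply AddSubmonoid.subset_closure
      refine ⟨k', w', _, hw', ?_, ?_, ?_, ?_, rfl⟩
      · intro i hi
        simp [h0 i (by omega), Finsupp.single_apply]; omega
      · intro i hi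
        simp [hn i hi, Finsupp.single_apply]; omega
      · intro i j hi hij
        rcases eq_or_lt_of_le hij with rfl | hij
        · exact le_rfl
        rcases eq_or_lt_of_le (Nat.succ_le_of_lt hi) with h | h
        · have h2 := hanti (r + 1 + 1) j (by omega) (by omega)
          have h3 := h0 i (by omega)
          have h4 : r + 1 = i := h
          simp [Finsupp.single_apply, h3, h4]
          rw [if_neg (by omega)]
          omega
        · have h2 := hanti i j (by omega) (by omega)
          simp only [Finsupp.add_apply, Finsupp.single_apply]
          rw [if_neg (by omega), if_neg (by omega)]
          omega
      · simp [h0 (r+1) le_rfl]; exact hcp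
    refine ⟨(fun a => X n ^ k * piW (w ++ [r]) (X r ^ a * monomial (μ + Finsupp.single (r+1) p) 1)) +
      ∑ c ∈ Finset.Ico q p, (fun a => X n ^ (p - c + k) *
        piW w (X r ^ a * monomial (μ + Finsupp.single (r+1) c) 1)), ?_, ?_⟩
    · refine AddSubmonoid.add_mem _ ?_ (AddSubmonoid.sum_mem _ ?_)
      · apply hmem p hqp le_rfl
        intro i hi
        rw [List.mem_append, List.mem_singleton] at hi
        rcases hi with hi | rfl
        · have := hw i hi; omega
        · omega
      · intro c hc
        rw [Finset.mem_Ico] at hc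
        apply hmem c hc.1 (by omega)
        intro i hi
        have := hw i hi; omega
    · intro e he
      simp only [Pi.add_apply, Finset.sum_apply]
      congr 1
      · rw [piW_append, mono_add_single, pI_pow r e p he, piW_sum, Finset.mul_sum]
        · refine Finset.sum_congr rfl fun b hb => ?_
          rw [piW_mul _ _ _ (hsym _)]; ring
        · rw [sw_monomial, swp_of_eq]
          rw [h0 r (by omega), h0 (r+1) le_rfl]
      · rw [Finset.mul_sum]
        refine Finset.sum_congr rfl fun c hc => ?_
        rw [piW_mul _ _ _ (hsym _), mono_add_single, pow_add]; ring

lemma branch (m : ℕ) : ∀ (r : ℕ) (ν : ℕ →₀ ℕ), (∀ i ≤ r, ν i = 0) → (∀ i, r + m + 1 < i → ν i = 0) →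
    (∀ i j, r < i → i ≤ j → ν j ≤ ν i) →
    ∃ K ∈ AddSubmonoid.closure (Gen (r + m + 1) r (ν (r + 1))), ∀ a, ν (r + 1) ≤ a →
      Tn (m + 1) r (X r ^ a * monomial ν 1) =
        ∑ c ∈ Finset.Icc (ν (r + 1)) a, X (r + m + 1) ^ (a - c) * K c := by
  induction m with
  | zero =>
    intro r ν h0 hn hanti
    set q := ν (r + 1) with hq
    refine ⟨fun a => X (r + 0 + 1) ^ q * piW [] (X r ^ a * monomial 0 1), ?_, ?_⟩
    · apply AddSubmonoid.subset_closure
      exact ⟨q, [], 0, by simp, by simp, by simp, by simp, by simp, rfl⟩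
    · intro a ha
      have : ν = 0 + Finsupp.single (r + 1) q := by
        ext i
        simp only [zero_add, Finsupp.single_apply]
        split_ifs with h
        · rw [← h]
        · rcases lt_or_ge r i with h' | h'
          · exact hn i (by omega)
          · exact h0 i h'
      rw [this, mono_add_single]
      simp only [Tn]
      rw [pI_pow r a q ha _ (by simp [sw])]
      refine Finset.sum_bij' (fun b _ => a + q - b) (fun b _ => a + q - b) ?_ ?_ ?_ ?_ ?_
      · intro b hb; simp only [Finset.mem_Icc] at *; omega
      · intro b hb; simp only [Finset.mem_Icc] at *; omega
      · intro b hb; simp only [Finset.mem_Icc] at *; omega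
      · intro b hb; simp only [Finset.mem_Icc] at *; omega
      · intro b hb
        simp only [Finset.mem_Icc, piW, List.foldr_nil, add_zero] at *
        conv_lhs => rw [show b = (a - (a + q - b)) + q by omega]
        rw [show a + q - ((a - (a + q - b)) + q) = a + q - b by omega, pow_add]
        ring
  | succ m ih =>
    intro r ν h0 hn hanti
    set p := ν (r + 1) with hp
    set ν' := ν.erase (r + 1) with hν'
    have hν : ν = ν' + Finsupp.single (r + 1) p := by
      rw [hν', hp, Finsupp.erase_add_single]
    have e1 : ∀ i, i ≠ r + 1 → ν' i = ν i := fun i hi => Finsupp.erase_ne hi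
    have e2 : ν' (r + 1) = 0 := Finsupp.erase_same
    have h0' : ∀ i ≤ r + 1, ν' i = 0 := by
      intro i hi
      rcases eq_or_ne i (r + 1) with rfl | h
      · exact e2
      · rw [e1 i h]; exact h0 i (by omega)
    obtain ⟨K, hK, eK⟩ := ih (r + 1) ν' h0'
      (by intro i hi; rw [e1 i (by omega)]; exact hn i (by omega))
      (by intro i j hi hij
          rw [e1 i (by omega), e1 j (by omega)]; exact hanti i j (by omega) hij)
    have hqp : ν' (r + 1 + 1) ≤ p := by
      rw [e1 _ (by omega)]; exact hanti _ _ (by omega) (by omega)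
    rw [show r + 1 + m + 1 = r + (m + 1) + 1 by omega] at *
    obtain ⟨K', hK', eK'⟩ := gen_lift _ r _ p hqp (by omega) K hK
    refine ⟨K', hK', fun a ha => ?_⟩
    have hsym : sw r (monomial ν' 1) = monomial ν' (1 : ℤ) := by
      rw [sw_monomial, swp_of_eq]
      rw [h0' r (by omega), h0' (r+1) le_rfl]
    rw [hν, mono_add_single, Tn, pI_pow r a p ha _ hsym, Tn_sum]
    trans ∑ b ∈ Finset.Icc p a, X r ^ (a + p - b) *
      ∑ c ∈ Finset.Icc (ν' (r + 1 + 1)) b, X (r + (m + 1) + 1) ^ (b - c) * K c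
    · refine Finset.sum_congr rfl fun b hb => ?_
      rw [Finset.mem_Icc] at hb
      rw [Tn_mul _ _ _ _ (fun i hi => sw_X_pow i r _ (by omega) (by omega)),
        eK b (by omega)]
    · rw [sum_reflect_identity _ _ _ _ _ _ hqp]
      refine Finset.sum_congr rfl fun b hb => ?_
      rw [Finset.mem_Icc] at hb
      rw [eK' b hb.1]

/-- Polynomials that are sums of `X n ^ k` times key polynomials in the variables `< n`. -/
noncomputable def BB (Key : (ℕ →₀ ℕ) → MvPolynomial ℕ ℤ) (n : ℕ) :
    AddSubmonoid (MvPolynomial ℕ ℤ) :=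
  AddSubmonoid.closure {f | ∃ (k : ℕ) (β : ℕ →₀ ℕ), (∀ i ≥ n, β i = 0) ∧ f = X n ^ k * Key β}

lemma BB_of {Key} (n k : ℕ) (β : ℕ →₀ ℕ) (h : ∀ i ≥ n, β i = 0) : X n ^ k * Key β ∈ BB Key n :=
  AddSubmonoid.subset_closure ⟨k, β, h, rfl⟩

lemma TnKey_zero {Key} (hK : IsKey Key) (n : ℕ) (α : ℕ →₀ ℕ)
    (hα : ∀ i j : ℕ, i ≤ j → α j ≤ α i) (hn : ∀ i, n < i → α i = 0) : Key α ∈ BB Key n := by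
  have hz : ∀ i ≥ n, α.erase n i = 0 := by
    intro i hi
    rcases eq_or_lt_of_le hi with h | h
    · subst h; simp
    · rw [Finsupp.erase_ne (by omega)]; exact hn i h
  have h2 : ∀ i j : ℕ, i ≤ j → α.erase n j ≤ α.erase n i := by
    intro i j hij
    by_cases hj : n ≤ j
    · rw [hz j hj]; exact Nat.zero_le _
    · rw [Finsupp.erase_ne (by omega), Finsupp.erase_ne (by omega)]; exact hα i j hij
  have h3 : Key α = X n ^ α n * Key (α.erase n) := by
    rw [hK.1 _ hα, hK.1 _ h2, ← mono_add_single, Finsupp.erase_add_single]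
  rw [h3]
  exact BB_of n _ _ hz

lemma TnKey {Key} (hK : IsKey Key) (n m r : ℕ) (hrm : r + m = n) (α : ℕ →₀ ℕ)
    (hα : ∀ i j : ℕ, i ≤ j → α j ≤ α i) (hn : ∀ i, n < i → α i = 0) :
    Tn m r (Key α) ∈ BB Key n := by
  cases m with
  | zero => exact TnKey_zero hK n α hα hn
  | succ m =>
  subst hrm
  set pre := α.filter (fun i => i < r) with hpre
  set ν := α.filter (fun i => r < i) with hν
  have eα : α = (ν + Finsupp.single r (α r)) + pre := by
    ext i
    simp only [hpre, hν, Finsupp.add_apply, Finsupp.filter_apply, Finsupp.single_apply]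
    rcases lt_trichotomy i r with h | h | h
    · rw [if_neg (by omega), if_neg (by omega), if_pos h]; omega
    · subst h; simp
    · rw [if_pos h, if_neg (by omega), if_neg (by omega)]; omega
  have hν0 : ∀ i ≤ r, ν i = 0 := by
    intro i hi; rw [hν, Finsupp.filter_apply, if_neg (by omega)]
  have hν1 : ∀ i, r < i → ν i = α i := by
    intro i hi; rw [hν, Finsupp.filter_apply, if_pos hi]
  have hp0 : ∀ i ≥ r, pre i = 0 := by
    intro i hi; rw [hpre, Finsupp.filter_apply, if_neg (by omega)]
  have hp1 : ∀ i, i < r → pre i = α i := by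
    intro i hi; rw [hpre, Finsupp.filter_apply, if_pos hi]
  have hsym : ∀ i, r ≤ i → sw i (monomial pre 1) = monomial pre (1 : ℤ) := by
    intro i hi
    rw [sw_monomial, swp_of_eq]
    rw [hp0 i hi, hp0 (i+1) (by omega)]
  obtain ⟨K, hKm, hKe⟩ := branch m r ν hν0 (by
    intro i hi; rw [hν1 i (by omega)]; exact hn i (by omega)) (by
    intro i j hi hij
    rw [hν1 i hi, hν1 j (by omega)]; exact hα i j hij)
  have e1 : Key α = monomial pre 1 * (X r ^ α r * monomial ν 1) := by
    rw [hK.1 α hα]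
    conv_lhs => rw [eα]
    rw [← mono_add_single, monomial_mul, one_mul, add_comm]
  rw [e1, Tn_mul _ _ _ _ hsym, hKe _ (by rw [hν1 _ (by omega)]; exact hα _ _ (by omega)),
    Finset.mul_sum]
  refine AddSubmonoid.sum_mem _ fun c hc => ?_
  rw [Finset.mem_Icc] at hc
  generalize α r - c = j
  have hq : ν (r + 1) ≤ c := hc.1
  clear hKe
  rw [← add_assoc]
  induction hKm using AddSubmonoid.closure_induction with
  | zero => simp
  | add K L _ _ h1 h2 =>
    rw [Pi.add_apply, mul_add, mul_add]
    exact AddSubmonoid.add_mem _ h1 h2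
  | mem g hg =>
    obtain ⟨k, w, μ, hw, h0, hn', hanti, hμq, rfl⟩ := hg
    have h1 : ∀ i, (pre + (μ + Finsupp.single r c)) i =
        if i < r then α i else if i = r then c else μ i := by
      intro i
      simp only [Finsupp.add_apply, Finsupp.single_apply]
      rcases lt_trichotomy i r with h | h | h
      · rw [if_neg (by omega), if_pos h, hp1 i h, h0 i (by omega)]
        omega
      · subst h; simp [hp0 i le_rfl, h0 i le_rfl]
      · rw [if_neg (by omega), if_neg (by omega), if_neg (by omega), hp0 i (by omega)]; omega
    have hanti2 : ∀ i j : ℕ, i ≤ j →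
        (pre + (μ + Finsupp.single r c)) j ≤ (pre + (μ + Finsupp.single r c)) i := by
      intro i j
      apply antitone_nat_of_succ_le
      intro i
      rw [h1, h1]
      have a1 := hα i (i+1) (by omega)
      by_cases hi1 : i + 1 < r
      · rw [if_pos hi1, if_pos (by omega)]; exact a1
      by_cases hi2 : i + 1 = r
      · subst hi2
        simp only [lt_self_iff_false, if_false, if_true]
        rw [if_pos (by omega)]
        omega
      by_cases hi3 : i = r
      · subst hi3
        simp
        omega
      · rw [if_neg hi1, if_neg hi2, if_neg (by omega), if_neg hi3]
        exact hanti i (i+1) (by omega) (by omega)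
    have e2 : monomial pre 1 * (X (r + m + 1) ^ j * (X (r + m + 1) ^ k *
        piW w (X r ^ c * monomial μ 1))) = X (r + m + 1) ^ (j + k) *
        Key (w.foldr hk (pre + (μ + Finsupp.single r c))) := by
      rw [← piW_key hK, hK.1 _ hanti2, ← mono_add_single,
        show (monomial (pre + (μ + Finsupp.single r c)) 1 : MvPolynomial ℕ ℤ) =
          monomial pre 1 * monomial (μ + Finsupp.single r c) 1 by rw [monomial_mul, one_mul],
        piW_mul _ _ _ (fun i hi => hsym i (hw i hi).1)]
      ring
    rw [e2]
    refine BB_of _ _ _ (foldr_hk_zero _ w (fun i hi => (hw i hi).2) _ ?_)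
    intro i hi
    rw [h1, if_neg (by omega), if_neg (by omega)]
    exact hn' i hi

lemma lemF {Key} (hK : IsKey Key) (n : ℕ) : ∀ (r m : ℕ) (α : ℕ →₀ ℕ), r + m = n →
    (∀ i, n < i → α i = 0) → (∀ i j : ℕ, i ≤ j → i ≠ r → j ≠ r → α j ≤ α i) →
    α (r + 1) ≤ α r → Tn m r (Key α) ∈ BB Key n := by
  intro r
  induction r with
  | zero =>
    intro m α hm hn h1 h2
    refine TnKey hK n m 0 hm α (fun i j => ?_) hn
    apply antitone_nat_of_succ_le
    intro i
    rcases Nat.eq_zero_or_pos i with rfl | h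
    · exact h2
    · exact h1 i (i+1) (by omega) (by omega) (by omega)
  | succ r ih =>
    intro m α hm hn h1 h2
    by_cases h3 : α (r + 1) ≤ α r
    · refine TnKey hK n m (r+1) hm α (fun i j => ?_) hn
      apply antitone_nat_of_succ_le
      intro i
      by_cases e1 : i = r
      · subst e1; exact h3
      by_cases e2 : i = r + 1
      · subst e2; exact h2
      exact h1 i (i+1) (by omega) (by omega) (by omega)
    · rw [key_rec hK α r (by omega)]
      have h4 := ih (m+1) (swp r α) (by omega) (by
        intro i hi; rw [swp_ne _ _ _ (by omega) (by omega)]; exact hn i hi) (by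
        intro i j hij hi hj
        by_cases e1 : i = r + 1
        · subst e1
          rw [swp_succ]
          by_cases e2 : j = r + 1
          · subst e2; rw [swp_succ]
          rw [swp_ne _ _ j (by omega) (by omega)]
          exact h1 r j (by omega) (by omega) (by omega)
        rw [swp_ne _ _ i (by omega) (by omega)]
        by_cases e2 : j = r + 1
        · subst e2; rw [swp_succ]
          exact h1 i r (by omega) (by omega) (by omega)
        rw [swp_ne _ _ j (by omega) (by omega)]
        exact h1 i j hij (by omega) (by omega)) (by
        rw [swp_self, swp_succ]; omega)
      exact h4

lemma pI_BB {Key} (hK : IsKey Key) (n i : ℕ) (hi : i + 1 < n) (f : MvPolynomial ℕ ℤ)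
    (hf : f ∈ BB Key n) : pI i f ∈ BB Key n := by
  unfold BB at hf
  induction hf using AddSubmonoid.closure_induction with
  | zero => rw [pI_zero]; exact AddSubmonoid.zero_mem _
  | add f g _ _ h1 h2 => rw [pI_add]; exact AddSubmonoid.add_mem _ h1 h2
  | mem f hf =>
    obtain ⟨k, β, hβ, rfl⟩ := hf
    rw [pI_mul _ _ _ (sw_X_pow i n k (by omega) (by omega)), pI_key hK]
    exact BB_of n k _ (hk_zero n i hi β hβ)

lemma lemB {Key} (hK : IsKey Key) (n : ℕ) (α : ℕ →₀ ℕ) (hn : ∀ i, n < i → α i = 0) :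
    Key α ∈ BB Key n := by
  induction hm : wt α using Nat.strong_induction_on generalizing α with
  | _ m ih =>
  subst hm
  by_cases h : ∃ i, i + 1 < n ∧ α i < α (i + 1)
  · obtain ⟨i, hi, ha⟩ := h
    rw [key_rec hK α i ha]
    apply pI_BB hK n i hi
    refine ih _ (wt_swp i α ha) _ ?_ rfl
    intro k hk
    rw [swp_ne _ _ _ (by omega) (by omega)]; exact hn k hk
  · push Not at h
    refine lemF hK n n 0 α (by omega) hn ?_ (by rw [hn (n+1) (by omega)]; omega)
    intro i j hij hi hj
    by_cases hjn : n < j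
    · rw [hn j hjn]; omega
    have : ∀ t, i + t < n → α (i + t) ≤ α i := by
      intro t
      induction t with
      | zero => intro _; exact le_rfl
      | succ t iht =>
        intro ht
        exact (h (i + t) (by omega)).trans (iht (by omega))
    have h5 := this (j - i) (by omega)
    rwa [show i + (j - i) = j by omega] at h5

lemma Seg_swp (i : ℕ) (d : ℕ →₀ ℕ) : Seg i d (swp i d) := by
  refine ⟨fun k h h' => swp_ne _ _ _ h h', ?_, ?_, ?_⟩
  · rw [swp_self, swp_succ]; omega
  · rw [swp_self]; omega
  · rw [swp_succ]; omega

open Classical in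
lemma coeff_pI_mono (i : ℕ) (d e : ℕ →₀ ℕ) (z : ℤ) (h : d (i + 1) ≤ d i) :
    coeff e (pI i (monomial d z)) = if Seg i d e then z else 0 := by
  have e0 : (monomial d z : MvPolynomial ℕ ℤ) = C z * monomial d 1 := by
    rw [C_mul_monomial, mul_one]
  rw [e0, pI_mul i (C z) _ (by simp [sw]), coeff_C_mul, monomial_decomp i d,
    pI_pow i _ _ h _ (sw_rst i d 1), coeff_sum]
  have h1 : ∀ c ∈ Finset.Icc (d (i+1)) (d i),
      coeff e (X i ^ (d i + d (i+1) - c) * (X (i+1) ^ c * monomial (rst i d) (1:ℤ))) =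
      if c = e (i+1) then (if Seg i d e then 1 else 0) else 0 := by
    intro c hc
    rw [Finset.mem_Icc] at hc
    rw [← mono_add_single, ← mono_add_single, coeff_monomial, ← ite_and]
    congr 1
    rw [eq_iff_iff]
    constructor
    · intro he
      have hk : ∀ k, e k = rst i d k + (if i + 1 = k then c else 0) +
          (if i = k then d i + d (i+1) - c else 0) := by
        intro k; rw [← he]; simp only [Finsupp.add_apply, Finsupp.single_apply]
      have k1 := hk i
      have k2 := hk (i+1)
      simp [rst_apply] at k1 k2
      refine ⟨k2.symm, ?_, ?_, ?_, ?_⟩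
      · intro k h1 h2
        rw [hk, rst_apply, if_neg (by omega), if_neg (by omega), if_neg (by omega)]; omega
      all_goals omega
    · rintro ⟨hc', h1, h2, h3, h4⟩
      ext k
      simp only [Finsupp.add_apply, Finsupp.single_apply, rst_apply]
      by_cases k1 : k = i
      · subst k1; simp; omega
      by_cases k2 : k = i + 1
      · subst k2; simp; omega
      rw [if_neg (by omega), if_neg (by omega), if_neg (by omega), h1 k k1 k2]; omega
  rw [Finset.sum_congr rfl h1, Finset.sum_ite_eq']
  by_cases hs : Seg i d e
  · have := hs
    obtain ⟨h1, h2, h3, h4⟩ := this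
    rw [if_pos (by rw [Finset.mem_Icc]; omega), if_pos hs, if_pos hs, mul_one]
  · simp [hs]

lemma pI_supp (i : ℕ) (S : (ℕ →₀ ℕ) → Prop) (hS : ∀ d e, S d → Seg i d e → S e)
    (f : MvPolynomial ℕ ℤ) (hf : ∀ d, coeff d f ≠ 0 → S d) :
    ∀ d, coeff d (pI i f) ≠ 0 → S d := by
  classical
  have hmono : ∀ d, S d → ∀ z e, coeff e (pI i (monomial d z)) ≠ 0 → S e := by
    intro d hd z e he
    by_cases h : d (i + 1) ≤ d i
    · rw [coeff_pI_mono i d e z h] at he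
      by_cases hs : Seg i d e
      · exact hS _ _ hd hs
      · simp [hs] at he
    · have h1 : pI i (monomial d z) =
          monomial d z + monomial (swp i d) z - pI i (monomial (swp i d) z) := by
        rw [eq_sub_iff_add_eq, ← pI_add]
        apply pI_of_sym
        rw [map_add, sw_monomial, sw_monomial, swp_swp, add_comm]
      have hd' : S (swp i d) := hS _ _ hd (Seg_swp i d)
      rw [h1, coeff_sub, coeff_add, coeff_monomial, coeff_monomial,
        coeff_pI_mono _ _ _ _ (by rw [swp_self, swp_succ]; omega)] at he
      by_contra hc
      apply he
      rw [if_neg (by rintro rfl; exact hc hd), if_neg (by rintro rfl; exact hc hd'),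
        if_neg (fun hs => hc (hS _ _ hd' hs))]
      simp
  intro e he
  rw [f.as_sum, pI_sum, coeff_sum] at he
  obtain ⟨d, hd, hde⟩ := Finset.exists_ne_zero_of_sum_ne_zero he
  exact hmono d (hf d (mem_support_iff.mp hd)) _ e hde

lemma bound_swp (J i : ℕ) (α : ℕ →₀ ℕ) (h : ∀ k, α k ≤ J) : ∀ k, swp i α k ≤ J := by
  intro k; rw [swp_apply]; exact h _

lemma lemU {Key} (hK : IsKey Key) (J : ℕ) (α : ℕ →₀ ℕ) (hJ : ∀ i, α i ≤ J) :
    ∀ d, coeff d (Key α) ≠ 0 → SS J α d := by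
  induction hm : wt α using Nat.strong_induction_on generalizing α with
  | _ m ih =>
  subst hm
  by_cases h : ∀ i j : ℕ, i ≤ j → α j ≤ α i
  · intro d hd
    rw [hK.1 α h, coeff_monomial] at hd
    have : α = d := by by_contra hc; simp [hc] at hd
    rw [← this]; exact SS_refl J α hJ
  · obtain ⟨i, hi⟩ := exists_ascent α h
    rw [key_rec hK α i hi]
    apply pI_supp i (SS J α) (fun d e hd hs => SS_seg J α i hi.le d e hd hs)
    intro d hd
    exact SS_up J α i hi.le d
      (ih _ (wt_swp i α hi) (swp i α) (bound_swp J i α hJ) rfl d hd)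

/-- Applying `pI i` gives nonnegative coefficients, positive on the segments through the support. -/
def Pr (i : ℕ) (f : MvPolynomial ℕ ℤ) : Prop :=
  (∀ d, 0 ≤ coeff d (pI i f)) ∧ ∀ d' d, coeff d' f ≠ 0 → Seg i d' d → 0 < coeff d (pI i f)

lemma Pr_zero (i : ℕ) : Pr i 0 := by
  refine ⟨fun d => by simp [pI_zero], fun d' d h => by simp at h⟩

lemma Pr_add (i : ℕ) (f g : MvPolynomial ℕ ℤ) (hf : Pr i f) (hg : Pr i g) : Pr i (f + g) := by
  refine ⟨fun d => ?_, fun d' d h hs => ?_⟩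
  · rw [pI_add, coeff_add]; exact add_nonneg (hf.1 d) (hg.1 d)
  · rw [pI_add, coeff_add]
    rw [coeff_add] at h
    by_cases h1 : coeff d' f = 0
    · have h2 : coeff d' g ≠ 0 := by intro h2; simp [h1, h2] at h
      exact add_pos_of_nonneg_of_pos (hf.1 d) (hg.2 d' d h2 hs)
    · exact add_pos_of_pos_of_nonneg (hf.2 d' d h1 hs) (hg.1 d)

lemma Pr_sum {ι : Type*} (i : ℕ) (s : Finset ι) (f : ι → MvPolynomial ℕ ℤ)
    (h : ∀ j ∈ s, Pr i (f j)) : Pr i (∑ j ∈ s, f j) := by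
  classical
  induction s using Finset.induction_on with
  | empty => simpa using Pr_zero i
  | insert a s ha ih =>
    rw [Finset.sum_insert ha]
    exact Pr_add i _ _ (h a (by simp)) (ih fun j hj => h j (by simp [hj]))

/-- Case where each monomial in the support is already dominant at `i`. -/
lemma Pr_dom (i : ℕ) (f : MvPolynomial ℕ ℤ) (h0 : ∀ d, 0 ≤ coeff d f)
    (hd : ∀ d, coeff d f ≠ 0 → d (i + 1) ≤ d i) : Pr i f := by
  classical
  rw [f.as_sum]
  apply Pr_sum
  intro d hdf
  have h1 := mem_support_iff.mp hdf
  have h2 : 0 < coeff d f := lt_of_le_of_ne (h0 d) (Ne.symm h1)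
  refine ⟨fun e => ?_, fun d' e h hs => ?_⟩
  · rw [coeff_pI_mono _ _ _ _ (hd d h1)]
    split_ifs
    · exact h2.le
    · exact le_rfl
  · rw [coeff_monomial] at h
    have : d = d' := by by_contra hc; simp [hc] at h
    subst this
    rw [coeff_pI_mono _ _ _ _ (hd d h1), if_pos hs]; exact h2

/-- The induction hypothesis `A(n)`. -/
def An (Key : (ℕ →₀ ℕ) → MvPolynomial ℕ ℤ) (n : ℕ) : Prop :=
  ∀ α : ℕ →₀ ℕ, (∀ i ≥ n, α i = 0) → (∀ d, 0 ≤ coeff d (Key α)) ∧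
    ∀ J, (∀ i, α i ≤ J) → ∀ d, SS J α d → coeff d (Key α) ≠ 0

lemma coeff_Xpow_mul (n k : ℕ) (f : MvPolynomial ℕ ℤ) (d : ℕ →₀ ℕ) :
    coeff d (X n ^ k * f) = if k ≤ d n then coeff (d - Finsupp.single n k) f else 0 := by
  rw [X_pow_eq_monomial, coeff_monomial_mul', one_mul]
  simp [Finsupp.single_le_iff]

lemma Pr_key {Key} (hK : IsKey Key) (n i k : ℕ) (hi : i + 1 < n) (hA : An Key n) (β : ℕ →₀ ℕ)
    (hβ : ∀ i ≥ n, β i = 0) : Pr i (X n ^ k * Key β) := by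
  have hA' := hA (hk i β) (hk_zero n i hi β hβ)
  have e : pI i (X n ^ k * Key β) = X n ^ k * Key (hk i β) := by
    rw [pI_mul _ _ _ (sw_X_pow i n k (by omega) (by omega)), pI_key hK]
  have hnn : ∀ d, 0 ≤ coeff d (X n ^ k * Key (hk i β)) := by
    intro d
    rw [coeff_Xpow_mul]
    split_ifs
    · exact hA'.1 _
    · exact le_rfl
  refine ⟨fun d => by rw [e]; exact hnn d, fun d' d h hs => ?_⟩
  rw [e]
  refine lt_of_le_of_ne (hnn d) (Ne.symm ?_)
  rw [coeff_Xpow_mul] at h ⊢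
  obtain ⟨h1, h2, h3, h4⟩ := hs
  have hdn := h1 n (by omega) (by omega)
  have hk' : k ≤ d' n := by by_contra hc; simp [hc] at h
  rw [if_pos hk'] at h
  rw [if_pos (by omega)]
  set J := β.support.sup β with hJ
  have hJb : ∀ i, β i ≤ J := by
    intro i
    by_cases h : i ∈ β.support
    · exact Finset.le_sup h
    · rw [Finsupp.notMem_support_iff.mp h]; omega
  have hJh : ∀ t, hk i β t ≤ J := by
    unfold hk
    split_ifs
    · exact hJb
    · exact bound_swp J i β hJb
  apply hA'.2 J hJh
  refine SS_seg J _ i (hk_le i β) _ _ (SS_hk J β i _ (lemU hK J β hJb _ h)) ?_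
  refine ⟨fun t t1 t2 => ?_, ?_, ?_, ?_⟩
  · simp [h1 t t1 t2]
  all_goals
    simp only [Finsupp.coe_tsub, Pi.sub_apply, Finsupp.single_apply]
    rw [if_neg (by omega : ¬ n = i), if_neg (by omega : ¬ n = i + 1)]
    omega

lemma DL_lt (C D : Finset ℕ) (h : DL C D) (n : ℕ) (hD : ∀ k ∈ D, k < n) : ∀ k ∈ C, k < n := by
  have hcount : ∀ R : Finset ℕ, Nat.count (· ∈ R) n = (R.filter (· < n)).card := by
    intro R
    rw [Nat.count_eq_card_filter_range]
    congr 1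
    ext k; simp [and_comm]
  have h1 := h.2 n
  rw [hcount, hcount, Finset.filter_true_of_mem hD, ← h.1] at h1
  have h2 := Finset.eq_of_subset_of_card_le (Finset.filter_subset (· < n) C) h1
  intro k hk
  rw [← h2] at hk
  exact (Finset.mem_filter.mp hk).2

/-- If `β i+1` is the smallest among the first entries, it is so for everything in the support. -/
lemma SS_last (J n : ℕ) (β d : ℕ →₀ ℕ) (hz : ∀ i, n < i → β i = 0)
    (hmin : ∀ i ≤ n, β n ≤ β i) (hd : SS J β d) (i : ℕ) (hi : i ≤ n) : d n ≤ d i := by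
  obtain ⟨C, hC, hdC⟩ := hd
  rw [hdC, hdC]
  apply Finset.card_le_card
  intro j hj
  simp only [Finset.mem_filter, Finset.mem_range] at *
  refine ⟨hj.1, ?_⟩
  have hCj := hC j hj.1
  by_cases h : j < β n
  · have : Col β j = Finset.range (n+1) := by
      ext k
      rw [mem_Col, Finset.mem_range]
      constructor
      · intro hk
        by_contra hc
        rw [hz k (by omega)] at hk; omega
      · intro hk
        have := hmin k (by omega); omega
    rw [this] at hCj
    rw [DL_range _ _ hCj, Finset.mem_range]; omega
  · have := DL_lt _ _ hCj n (by
      intro k hk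
      rw [mem_Col] at hk
      by_contra hc
      rcases eq_or_lt_of_le (not_lt.mp hc) with h1 | h1
      · subst h1; omega
      · rw [hz k h1] at hk; omega) n hj.2
    omega

lemma An_all {Key} (hK : IsKey Key) (n : ℕ) : An Key n := by
  induction n with
  | zero =>
    intro α h0
    have h : ∀ i j : ℕ, i ≤ j → α j ≤ α i := by
      intro i j _; rw [h0 j (by omega)]; omega
    refine ⟨fun d => ?_, fun J hJ d hd => ?_⟩
    · rw [hK.1 α h, coeff_monomial]; split_ifs <;> norm_num
    · rw [SS_anti J α hJ h d hd, hK.1 α h, coeff_monomial]; simp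
  | succ n ihn =>
    intro α h0
    induction hm : wt α using Nat.strong_induction_on generalizing α with
    | _ m ih =>
    subst hm
    by_cases h : ∀ i j : ℕ, i ≤ j → α j ≤ α i
    · refine ⟨fun d => ?_, fun J hJ d hd => ?_⟩
      · rw [hK.1 α h, coeff_monomial]; split_ifs <;> norm_num
      · rw [SS_anti J α hJ h d hd, hK.1 α h, coeff_monomial]; simp
    suffices hP : ∃ i, α i < α (i + 1) ∧ Pr i (Key (swp i α)) by
      obtain ⟨i, hi, hP⟩ := hP
      have hin : i + 1 < n + 1 := by
        by_contra hc
        rw [h0 (i+1) (by omega)] at hi; omega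
      have h0' : ∀ k ≥ n + 1, swp i α k = 0 := by
        intro k hk; rw [swp_ne _ _ _ (by omega) (by omega)]; exact h0 k hk
      have hA := ih _ (wt_swp i α hi) _ h0' rfl
      rw [key_rec hK α i hi]
      refine ⟨hP.1, fun J hJ d hd => ?_⟩
      obtain ⟨d', hd', hs⟩ := SS_top J α i hi.le d hd
      exact (hP.2 d' d (hA.2 J (bound_swp J i α hJ) d' hd') hs).ne'
    by_cases h1 : ∃ i, i + 1 < n ∧ α i < α (i + 1)
    · obtain ⟨i, hi, ha⟩ := h1
      refine ⟨i, ha, ?_⟩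
      have hB := lemB hK n (swp i α) (by
        intro k hk; rw [swp_ne _ _ _ (by omega) (by omega)]; exact h0 k hk)
      unfold BB at hB
      generalize Key (swp i α) = f at hB ⊢
      induction hB using AddSubmonoid.closure_induction with
      | zero => exact Pr_zero i
      | add f g _ _ h1 h2 => exact Pr_add i f g h1 h2
      | mem f hf =>
        obtain ⟨k, β, hβ, rfl⟩ := hf
        exact Pr_key hK n i k hi ihn β hβ
    · push Not at h1
      obtain ⟨i, hi⟩ := exists_ascent α h
      have hin : i + 1 = n := by
        by_contra hc
        by_cases h2 : i + 1 < n
        · have := h1 i h2; omega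
        · rw [h0 (i+1) (by omega)] at hi; omega
      refine ⟨i, hi, ?_⟩
      have h0' : ∀ k ≥ n + 1, swp i α k = 0 := by
        intro k hk; rw [swp_ne _ _ _ (by omega) (by omega)]; exact h0 k hk
      have hA := ih _ (wt_swp i α hi) _ h0' rfl
      refine Pr_dom i _ hA.1 ?_
      intro d hd
      have hJb : ∀ t, α t ≤ α.support.sup α := by
        intro t
        by_cases h : t ∈ α.support
        · exact Finset.le_sup h
        · rw [Finsupp.notMem_support_iff.mp h]; omega
      have hS := lemU hK _ (swp i α) (bound_swp _ i α hJb) d hd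
      have hdec : ∀ t, ∀ j, j + t = i → α i ≤ α j := by
        intro t
        induction t with
        | zero => intro j hj; rw [show j = i by omega]
        | succ t iht =>
          intro j hj
          exact (iht (j+1) (by omega)).trans (h1 j (by omega))
      refine SS_last _ (i+1) (swp i α) d (fun k hk => h0' k (by omega)) ?_ hS i (by omega)
      intro k hk
      rw [swp_succ]
      by_cases k1 : k = i
      · subst k1; rw [swp_self]; exact hi.le
      by_cases k2 : k = i + 1
      · subst k2; rw [swp_succ]
      rw [swp_ne _ _ _ k1 k2]
      exact hdec (i - k) k (by omega)

lemma sort_lt_iff (R : Finset ℕ) (k : ℕ) (hk : k < (R.sort (· ≤ ·)).length) (v : ℕ) :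
    (R.sort (· ≤ ·)).get ⟨k, hk⟩ < v ↔ k < Nat.count (· ∈ R) v := by
  have hfin : (Set.ofPred (· ∈ R)).Finite := R.finite_toSet
  have hto : hfin.toFinset = R := by
    ext x; rw [Set.Finite.mem_toFinset]; exact Iff.rfl
  have h1 : Nat.nth (· ∈ R) k = (R.sort (· ≤ ·)).get ⟨k, hk⟩ := by
    rw [Nat.nth_eq_getD_sort hfin, hto, List.getD_eq_getElem _ _ hk]; rfl
  have hcard : k < R.card := by simpa using hk
  have h2 : Nat.count (· ∈ R) (Nat.nth (· ∈ R) k + 1) = k + 1 :=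
    Nat.count_nth_succ (by intro hf; convert hcard)
  rw [← h1]
  constructor
  · intro h
    have := Nat.count_monotone (· ∈ R) (Nat.succ_le_of_lt h)
    rw [Nat.succ_eq_add_one, h2] at this
    omega
  · exact Nat.nth_lt_of_lt_count

lemma count_le_card (R : Finset ℕ) (v : ℕ) : Nat.count (· ∈ R) v ≤ R.card := by
  rw [Nat.count_eq_card_filter_range]
  apply Finset.card_le_card
  intro k hk
  exact (Finset.mem_filter.mp hk).2

lemma DomLE_iff (R S : Finset ℕ) : DomLE R S ↔ DL R S := by
  unfold DomLE DL
  refine and_congr_right fun hc => ⟨fun h v => ?_, fun h k hR hS => ?_⟩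
  · by_contra hlt
    push Not at hlt
    have h1 := count_le_card S v
    have hS : Nat.count (· ∈ R) v < (S.sort (· ≤ ·)).length := by
      rw [Finset.length_sort]; omega
    have hR : Nat.count (· ∈ R) v < (R.sort (· ≤ ·)).length := by
      rw [Finset.length_sort]; omega
    have h2 := h _ hR hS
    have h3 := (sort_lt_iff S _ hS v).mpr hlt
    have h4 := (sort_lt_iff R _ hR v).mp (lt_of_le_of_lt h2 h3)
    omega
  · have h1 := (sort_lt_iff S k hS ((S.sort (· ≤ ·)).get ⟨k, hS⟩ + 1)).mp (Nat.lt_succ_self _)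
    exact Nat.lt_succ_iff.mp ((sort_lt_iff R k hR _).mpr (lt_of_lt_of_le h1 (h _)))


/-- The support of the key polynomial `κ_α` equals `{ξ^C : C_j ≤ D(α)_j for all j ∈ [n]}`,
where `D(α)_j = {i ≤ n : α_i ≥ j}` are the columns of the skyline diagram of `α`
(`0`-indexed below: column `j` is `{i < n : α_{i+1} ≥ j+1}`), and `ξ^C_i = #{j : i ∈ C_j}`. -/
theorem stmt15 (Key : (ℕ →₀ ℕ) → MvPolynomial ℕ ℤ)
    -- If `α` is weakly decreasing then `κ_α = x_1^{α_1} x_2^{α_2} ⋯` (variables are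
    -- `0`-indexed: the variable `X i` is `x_{i+1}` and `α i` is `α_{i+1}`).
    (hbase : ∀ α : ℕ →₀ ℕ, (∀ i j : ℕ, i ≤ j → α j ≤ α i) → Key α = monomial α 1)
    -- If `α i < α (i+1)` then `κ_α = ∂_i (x_i κ_α̂)` where `α̂` swaps entries `i`, `i+1`:
    -- `(xᵢ - xᵢ₊₁) ⬝ κ_α = xᵢ κ_α̂ - sᵢ ⬝ (xᵢ κ_α̂)`.
    (hrec : ∀ (α : ℕ →₀ ℕ) (i : ℕ), α i < α (i + 1) →
      (X i - X (i + 1)) * Key α =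
        X i * Key (Finsupp.equivMapDomain (Equiv.swap i (i + 1)) α) -
          rename (Equiv.swap i (i + 1))
            (X i * Key (Finsupp.equivMapDomain (Equiv.swap i (i + 1)) α)))
    (α : ℕ →₀ ℕ)
    -- `l = max{i : α_i ≠ 0}` (`1`-indexed), i.e. `l` is least with `α_i = 0` for all `i ≥ l`
    (l n : ℕ) (hl₁ : ∀ i, α i ≠ 0 → i < l) (hl₂ : ∀ m, (∀ i, α i ≠ 0 → i < m) → l ≤ m)
    -- `n = max{l, α_1, …, α_l}`
    (hn : n = max l (α.support.sup α))
    :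
    (↑(Key α).support : Set (ℕ →₀ ℕ)) =
      {d : ℕ →₀ ℕ | ∃ C : ℕ → Finset ℕ,
        (∀ j < n, C j ⊆ Finset.range n ∧
          DomLE (C j) ((Finset.range n).filter fun i => j + 1 ≤ α i)) ∧
        ∀ i, d i = ((Finset.range n).filter fun j => i ∈ C j).card} := by
  have hK : IsKey Key := ⟨hbase, hrec⟩
  have hJ : ∀ i, α i ≤ n := by
    intro i
    by_cases h : i ∈ α.support
    · have : α i ≤ α.support.sup α := Finset.le_sup h
      omega
    · rw [Finsupp.notMem_support_iff.mp h]; omega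
  have hz : ∀ i ≥ n, α i = 0 := by
    intro i hi
    by_contra hc
    have := hl₁ i hc
    omega
  have hcol : ∀ j, ((Finset.range n).filter fun i => j + 1 ≤ α i) = Col α j := by
    intro j
    ext i
    rw [mem_Col, Finset.mem_filter, Finset.mem_range]
    constructor
    · intro h; omega
    · intro h
      refine ⟨?_, by omega⟩
      by_contra hc
      rw [hz i (by omega)] at h; omega
  have hSS : ∀ d, coeff d (Key α) ≠ 0 ↔ SS n α d := fun d =>
    ⟨lemU hK n α hJ d, (An_all hK n α hz).2 n hJ d⟩
  ext d
  rw [Finset.mem_coe, mem_support_iff, hSS, Set.mem_setOf_eq]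
  constructor
  · rintro ⟨C, hC, hd⟩
    refine ⟨C, fun j hj => ⟨fun k hk => ?_, ?_⟩, hd⟩
    · rw [Finset.mem_range]
      refine DL_lt _ _ (hC j hj) n ?_ k hk
      intro t ht
      rw [← hcol] at ht
      exact Finset.mem_range.mp (Finset.mem_filter.mp ht).1
    · rw [hcol, DomLE_iff]; exact hC j hj
  · rintro ⟨C, hC, hd⟩
    refine ⟨C, fun j hj => ?_, hd⟩
    have := (hC j hj).2
    rwa [hcol, DomLE_iff] at this
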